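/- For every non-negative measurable functions f, g on I=(0,a), 0<a≤∞, whose decreasing rearrangements f*, g* are finite everywhere on (0,a) and such that (f − g)₊ has locally integrable decreasing rearrangement, one has the Hardy–Littlewood submajorization (f* − g*)₊ ≺ (f − g)₊, i.e. ∫₀ˣ ((f* − g*)₊)* dm ≤ ∫₀ˣ ((f − g)₊)* dm for every x > 0, where h₊ = max{h,0}. -/

import Mathlib

open MeasureTheory Set Filter
open scoped ENNReal

/-- The interval `(0, a)` for `a : ℝ≥0∞` (equals `(0,∞)` when `a = ∞`). -/
def Iset (a : ℝ≥0∞) : Set ℝ := {x : ℝ | 0 < x ∧ ENNReal.ofReal x < a}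

/-- Lebesgue measure restricted to the interval `(0,a)`. -/
noncomputable def volI (a : ℝ≥0∞) : Measure ℝ := volume.restrict (Iset a)

/-- Decreasing rearrangement of an `ℝ≥0∞`-valued function with respect to a measure `μ`:
`f^{*,μ}(t) = inf {s > 0 : μ({f > s}) ≤ t}`. -/
noncomputable def rearrE (μ : Measure ℝ) (f : ℝ → ℝ≥0∞) (t : ℝ) : ℝ≥0∞ :=
  sInf {s : ℝ≥0∞ | 0 < s ∧ μ {x | s < f x} ≤ ENNReal.ofReal t}

/-- Decreasing rearrangement of a real function with respect to a measure `μ` on `ℝ`: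
`f^{*,μ}(t) = inf {s > 0 : μ({|f| > s}) ≤ t}`. -/
noncomputable def rearr (μ : Measure ℝ) (f : ℝ → ℝ) (t : ℝ) : ℝ≥0∞ :=
  rearrE μ (fun x => ENNReal.ofReal |f x|) t

/-- The measure `w·dm` on the set `I`. -/
noncomputable def wMeas (I : Set ℝ) (w : ℝ → ℝ) : Measure ℝ :=
  (volume.restrict I).withDensity (fun t => ENNReal.ofReal (w t))

/-- `W(t) = ∫₀ᵗ w dm`. -/
noncomputable def Wfun (w : ℝ → ℝ) (t : ℝ) : ℝ := ∫ s in Set.Ioo (0:ℝ) t, w s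

/-- `b = ∫_I w dm` as an extended real number. -/
noncomputable def bval (a : ℝ≥0∞) (w : ℝ → ℝ) : ℝ≥0∞ := ∫⁻ x in Iset a, ENNReal.ofReal (w x)

/-!
The integral `∫₀ˣ k*` is the minimum over `c` of `∫ (k - c)₊ dμ + c x`, attained at `c = k*(x)`.
It therefore suffices to show `∫ (f* - g* - c)₊ dm ≤ ∫ (f - g - c)₊ dμ` for every constant `c`,
and `c` can be absorbed in `f` because `(f - c)₊* = (f* - c)₊`. The layer cake formula turns
`∫ (f - g)₊ dμ` into `∫₀^∞ μ({f > r} \ {g > r}) dr`. The superlevel sets of `f*` and `g*` are nested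
intervals `(0, μ{f > r})` and `(0, μ{g > r})`, and the difference of the two lengths is at most
`μ({f > r} \ {g > r})`.
-/

lemma measurableSet_Iset (b : ℝ≥0∞) : MeasurableSet (Iset b) :=
  measurableSet_Ioi.inter (ENNReal.measurable_ofReal measurableSet_Iio)

lemma Iset_mono : Monotone Iset :=
  fun _ _ h _ hx => ⟨hx.1, hx.2.trans_le h⟩

lemma volume_Iset (b : ℝ≥0∞) : volume (Iset b) = b := by
  by_cases hb : b = ∞
  · have hIset : Iset b = Ioi 0 := by ext x; simp [Iset, hb]
    rw [hIset, hb, Real.volume_Ioi]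
  · have hIset : Iset b = Ioo 0 b.toReal := by
      ext x
      exact and_congr_right fun hx => ENNReal.ofReal_lt_iff_lt_toReal hx.le hb
    rw [hIset, Real.volume_Ioo, sub_zero, ENNReal.ofReal_toReal hb]

lemma volume_Iset_diff_Iset (b c : ℝ≥0∞) : volume (Iset b \ Iset c) = b - c := by
  rcases le_or_gt b c with hbc | hcb
  · rw [sdiff_eq_empty.2 (Iset_mono hbc), measure_empty, tsub_eq_zero_of_le hbc]
  · rw [measure_sdiff (Iset_mono hcb.le) (measurableSet_Iset c).nullMeasurableSet
      (by rw [volume_Iset]; exact hcb.ne_top), volume_Iset, volume_Iset]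

instance sFinite_volI (a : ℝ≥0∞) : SFinite (volI a) :=
  inferInstanceAs (SFinite (volume.restrict (Iset a)))

lemma lintegral_tsub_eq_lintegral_meas_diff {α : Type*} [MeasurableSpace α] {μ : Measure α}
    [SFinite μ] {f g : α → ℝ≥0∞} (hf : Measurable f) (hg : Measurable g) :
    ∫⁻ x, (f x - g x) ∂μ =
      ∫⁻ r in Ioi (0 : ℝ), μ ({x | ENNReal.ofReal r < f x} \ {x | ENNReal.ofReal r < g x}) := by
  set S : Set (α × ℝ) := {p | ENNReal.ofReal p.2 < f p.1} \ {p | ENNReal.ofReal p.2 < g p.1}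
  have hS : MeasurableSet S :=
    (measurableSet_lt (by fun_prop) (by fun_prop)).diff
      (measurableSet_lt (by fun_prop) (by fun_prop))
  have section_eq (x : α) : Prod.mk x ⁻¹' S ∩ Ioi 0 = Iset (f x) \ Iset (g x) := by
    ext r
    simp only [S, Iset, mem_inter_iff, mem_preimage, Set.mem_sdiff, mem_ofPred_eq, mem_Ioi]
    tauto
  calc ∫⁻ x, (f x - g x) ∂μ
      = ∫⁻ x, volume.restrict (Ioi 0) (Prod.mk x ⁻¹' S) ∂μ := by
        simp only [Measure.restrict_apply (measurable_prodMk_left hS), section_eq,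
          volume_Iset_diff_Iset]
    _ = μ.prod (volume.restrict (Ioi 0)) S := (Measure.prod_apply hS).symm
    _ = _ := Measure.prod_apply_symm hS

section Rearrangement

variable (μ : Measure ℝ)

lemma rearrE_le_iff (f : ℝ → ℝ≥0∞) (t : ℝ) (s : ℝ≥0∞) :
    rearrE μ f t ≤ s ↔ μ {x | s < f x} ≤ ENNReal.ofReal t := by
  constructor
  · intro h
    rcases eq_or_ne s ∞ with rfl | hs
    · simp
    obtain ⟨u, hu_anti, hu_mem, hu_lim⟩ := exists_seq_strictAnti_tendsto' hs.lt_top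
    have superlevel_eq : {x | s < f x} = ⋃ n, {x | u n < f x} := by
      ext x
      simp only [mem_ofPred_eq, mem_iUnion]
      exact ⟨fun hx => (hu_lim.eventually_lt_const hx).exists,
        fun ⟨n, hn⟩ => (hu_mem n).1.trans hn⟩
    have superlevel_mono : Monotone fun n => {x | u n < f x} :=
      fun m n hmn x hx => (hu_anti.antitone hmn).trans_lt hx
    rw [superlevel_eq, superlevel_mono.measure_iUnion]
    refine iSup_le fun n => ?_
    obtain ⟨v, hv, hvn⟩ := sInf_lt_iff.1 (h.trans_lt (hu_mem n).1)
    exact (measure_mono fun x hx => hvn.trans hx).trans hv.2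
  · intro h
    refine le_of_forall_gt_imp_ge_of_dense fun v hv => sInf_le ⟨pos_of_gt hv, ?_⟩
    exact (measure_mono fun x hx => hv.trans hx).trans h

lemma lt_rearrE_iff (f : ℝ → ℝ≥0∞) (t : ℝ) (s : ℝ≥0∞) :
    s < rearrE μ f t ↔ ENNReal.ofReal t < μ {x | s < f x} := by
  rw [← not_le, rearrE_le_iff, not_le]

lemma antitone_rearrE (f : ℝ → ℝ≥0∞) : Antitone (rearrE μ f) :=
  fun _ _ h => sInf_le_sInf fun _ hs => ⟨hs.1, hs.2.trans (ENNReal.ofReal_le_ofReal h)⟩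

lemma measurable_rearrE (f : ℝ → ℝ≥0∞) : Measurable (rearrE μ f) :=
  (antitone_rearrE μ f).measurable

lemma setOf_lt_rearrE_inter_Ioi (f : ℝ → ℝ≥0∞) (s : ℝ≥0∞) :
    {t | s < rearrE μ f t} ∩ Ioi 0 = Iset (μ {x | s < f x}) := by
  ext t
  simp only [Iset, mem_inter_iff, mem_ofPred_eq, lt_rearrE_iff, mem_Ioi]
  exact and_comm

lemma rearrE_tsub_const (f : ℝ → ℝ≥0∞) (c : ℝ≥0∞) (t : ℝ) :
    rearrE μ (fun x => f x - c) t = rearrE μ f t - c :=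
  eq_of_forall_ge_iff fun s => by
    simp only [rearrE_le_iff, tsub_le_iff_right, lt_tsub_iff_right]

variable {μ}

lemma rearrE_mono_ae {f g : ℝ → ℝ≥0∞} (hfg : f ≤ᵐ[μ] g) : rearrE μ f ≤ rearrE μ g := fun _ =>
  sInf_le_sInf fun _ hs =>
    ⟨hs.1, (measure_mono_ae (hfg.mono fun _ hle hlt => lt_of_lt_of_le hlt hle)).trans hs.2⟩

lemma rearrE_tsub_le_rearr_max_sub {f : ℝ → ℝ} (g : ℝ → ℝ) (hf : ∀ᵐ x ∂μ, 0 ≤ f x) :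
    rearrE μ (fun x => ENNReal.ofReal |f x| - ENNReal.ofReal |g x|) ≤
      rearr μ fun x => max (f x - g x) 0 := by
  refine rearrE_mono_ae (hf.mono fun x hx => ?_)
  dsimp only
  rw [← ENNReal.ofReal_sub _ (abs_nonneg _), abs_of_nonneg hx]
  refine ENNReal.ofReal_le_ofReal ?_
  calc f x - |g x| ≤ f x - g x := sub_le_sub_left (le_abs_self _) _
    _ ≤ max (f x - g x) 0 := le_max_left _ _
    _ ≤ |max (f x - g x) 0| := le_abs_self _

variable [SFinite μ] {f g : ℝ → ℝ≥0∞}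

lemma lintegral_rearrE (hf : Measurable f) :
    ∫⁻ t in Ioi (0 : ℝ), rearrE μ f t = ∫⁻ x, f x ∂μ := by
  have layer_cake_rearrE := lintegral_tsub_eq_lintegral_meas_diff
    (μ := volume.restrict (Ioi (0 : ℝ))) (measurable_rearrE μ f) measurable_zero
  have layer_cake := lintegral_tsub_eq_lintegral_meas_diff (μ := μ) hf measurable_zero
  simp only [Pi.zero_apply, tsub_zero, not_lt_zero, ofPred_false, sdiff_empty]
    at layer_cake_rearrE layer_cake
  simp only [layer_cake_rearrE, layer_cake, Measure.restrict_apply' measurableSet_Ioi,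
    setOf_lt_rearrE_inter_Ioi, volume_Iset]

lemma lintegral_rearrE_tsub_rearrE_le (a : ℝ≥0∞) (hf : Measurable f) (hg : Measurable g) :
    ∫⁻ t, (rearrE μ f t - rearrE μ g t) ∂volI a ≤ ∫⁻ x, (f x - g x) ∂μ := by
  rw [lintegral_tsub_eq_lintegral_meas_diff (measurable_rearrE μ f) (measurable_rearrE μ g),
    lintegral_tsub_eq_lintegral_meas_diff hf hg]
  refine lintegral_mono fun r => ?_
  set s := ENNReal.ofReal r
  calc volI a ({t | s < rearrE μ f t} \ {t | s < rearrE μ g t})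
      ≤ volume (Iset (μ {x | s < f x}) \ Iset (μ {x | s < g x})) := by
        rw [← setOf_lt_rearrE_inter_Ioi, ← setOf_lt_rearrE_inter_Ioi, volI,
          Measure.restrict_apply' (measurableSet_Iset a)]
        exact measure_mono fun t ⟨⟨htf, htg⟩, ht⟩ => ⟨⟨htf, ht.1⟩, fun h => htg h.1⟩
    _ = μ {x | s < f x} - μ {x | s < g x} := volume_Iset_diff_Iset _ _
    _ ≤ μ ({x | s < f x} \ {x | s < g x}) := le_measure_sdiff

lemma lintegral_rearrE_tsub_rearrE_tsub_const_le (a : ℝ≥0∞) (hf : Measurable f)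
    (hg : Measurable g) (c : ℝ≥0∞) :
    ∫⁻ t, (rearrE μ f t - rearrE μ g t - c) ∂volI a ≤ ∫⁻ x, (f x - g x - c) ∂μ := by
  simpa only [rearrE_tsub_const, tsub_right_comm] using
    lintegral_rearrE_tsub_rearrE_le (μ := μ) a (hf.sub_const c) hg

lemma setLIntegral_rearrE_le (hf : Measurable f) (x : ℝ) (c : ℝ≥0∞) :
    ∫⁻ t in Ioo 0 x, rearrE μ f t ≤ ∫⁻ y, (f y - c) ∂μ + ∫⁻ _ in Ioo 0 x, c := by
  rw [← lintegral_rearrE (hf.sub_const c)]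
  simp only [rearrE_tsub_const]
  calc ∫⁻ t in Ioo 0 x, rearrE μ f t
      ≤ ∫⁻ t in Ioo 0 x, (rearrE μ f t - c + c) := lintegral_mono fun t => le_tsub_add
    _ = (∫⁻ t in Ioo 0 x, (rearrE μ f t - c)) + ∫⁻ _ in Ioo 0 x, c :=
        lintegral_add_right _ measurable_const
    _ ≤ (∫⁻ t in Ioi 0, (rearrE μ f t - c)) + ∫⁻ _ in Ioo 0 x, c := by
        gcongr
        exact Ioo_subset_Ioi_self

lemma setLIntegral_rearrE_eq (hf : Measurable f) (x : ℝ) :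
    ∫⁻ t in Ioo 0 x, rearrE μ f t =
      ∫⁻ y, (f y - rearrE μ f x) ∂μ + ∫⁻ _ in Ioo 0 x, rearrE μ f x := by
  have tail_eq_zero : ∫⁻ t in Ioi 0 \ Ioo 0 x, (rearrE μ f t - rearrE μ f x) = 0 :=
    setLIntegral_eq_zero (measurableSet_Ioi.diff measurableSet_Ioo) fun t ht =>
      tsub_eq_zero_of_le (antitone_rearrE μ f (not_lt.1 fun htx => ht.2 ⟨ht.1, htx⟩))
  symm
  calc ∫⁻ y, (f y - rearrE μ f x) ∂μ + ∫⁻ _ in Ioo 0 x, rearrE μ f x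
      = (∫⁻ t in Ioi 0, (rearrE μ f t - rearrE μ f x)) + ∫⁻ _ in Ioo 0 x, rearrE μ f x := by
        simp only [← lintegral_rearrE (hf.sub_const _), rearrE_tsub_const]
    _ = (∫⁻ t in Ioo 0 x, (rearrE μ f t - rearrE μ f x)) + ∫⁻ _ in Ioo 0 x, rearrE μ f x := by
        rw [← lintegral_inter_add_sdiff _ (Ioi 0) measurableSet_Ioo, tail_eq_zero, add_zero,
          inter_eq_right.2 Ioo_subset_Ioi_self]
    _ = ∫⁻ t in Ioo 0 x, (rearrE μ f t - rearrE μ f x + rearrE μ f x) :=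
        (lintegral_add_right _ measurable_const).symm
    _ = ∫⁻ t in Ioo 0 x, rearrE μ f t :=
        setLIntegral_congr_fun measurableSet_Ioo fun t ht =>
          tsub_add_cancel_of_le (antitone_rearrE μ f ht.2.le)

lemma setLIntegral_rearrE_le_of_forall_lintegral_tsub_le {ν : Measure ℝ} [SFinite ν]
    (hf : Measurable f) (hg : Measurable g)
    (hfg : ∀ c : ℝ≥0∞, ∫⁻ y, (f y - c) ∂μ ≤ ∫⁻ y, (g y - c) ∂ν) (x : ℝ) :
    ∫⁻ t in Ioo 0 x, rearrE μ f t ≤ ∫⁻ t in Ioo 0 x, rearrE ν g t := by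
  rw [setLIntegral_rearrE_eq hg]
  exact (setLIntegral_rearrE_le hf x (rearrE ν g x)).trans (add_le_add_left (hfg _) _)

end Rearrangement

theorem stmt_4_general (μ : Measure ℝ) [SFinite μ] (a : ℝ≥0∞) {f g : ℝ → ℝ≥0∞}
    (hf : Measurable f) (hg : Measurable g) (x : ℝ) :
    ∫⁻ t in Ioo 0 x, rearrE (volI a) (fun s => rearrE μ f s - rearrE μ g s) t ≤
      ∫⁻ t in Ioo 0 x, rearrE μ (fun y => f y - g y) t :=
  setLIntegral_rearrE_le_of_forall_lintegral_tsub_le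
    ((measurable_rearrE μ f).sub (measurable_rearrE μ g)) (hf.sub hg)
    (lintegral_rearrE_tsub_rearrE_tsub_const_le a hf hg) x

/-- For non-negative measurable `f, g` on `I=(0,a)` with everywhere finite
rearrangements such that `(f−g)₊` has locally integrable decreasing rearrangement, one has the
Hardy–Littlewood submajorization `(f* − g*)₊ ≺ (f − g)₊`. -/
theorem stmt_4 (a : ℝ≥0∞) (ha : 0 < a) (f g : ℝ → ℝ)
    (hf : Measurable f) (hg : Measurable g)
    (hf0 : ∀ x ∈ Iset a, 0 ≤ f x) (hg0 : ∀ x ∈ Iset a, 0 ≤ g x)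
    (hffin : ∀ t ∈ Iset a, rearr (volI a) f t ≠ ∞)
    (hgfin : ∀ t ∈ Iset a, rearr (volI a) g t ≠ ∞)
    (hloc : ∀ x : ℝ, 0 < x →
      ∫⁻ t in Set.Ioo 0 x, rearr (volI a) (fun y => max (f y - g y) 0) t ≠ ∞) :
    ∀ x : ℝ, 0 < x →
      ∫⁻ t in Set.Ioo 0 x,
          rearrE (volI a) (fun s => rearr (volI a) f s - rearr (volI a) g s) t
        ≤ ∫⁻ t in Set.Ioo 0 x, rearr (volI a) (fun y => max (f y - g y) 0) t := by
  have hf0_ae : ∀ᵐ y ∂volI a, 0 ≤ f y := ae_restrict_of_forall_mem (measurableSet_Iset a) hf0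
  exact fun x _ => (stmt_4_general (volI a) a (by fun_prop) (by fun_prop) x).trans
    (lintegral_mono (rearrE_tsub_le_rearr_max_sub g hf0_ae))
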